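/- Let T ≥ 1. For every ε > 0 there exist a sequence of non-negative reals (a_n)_{n ≥ 1} and a function A : ℂ → ℂ such that: A is meromorphic on ℂ; for every s with Re s > 1 the series ∑_{n ≥ 1} a_n n^{−s} converges absolutely with sum A(s); A is analytic at every point s ≠ 1 with |Im s| ≤ T; (s−1)·A(s) → 1 as s → 1 (i.e., A has a simple pole at s = 1 with residue 1); and limsup_{x→∞} (1/x)·∑_{n ≤ x} a_n > (π/T)·coth(π/T) + π/T − ε while liminf_{x→∞} (1/x)·∑_{n ≤ x} a_n < (π/T)·coth(π/T) − π/T + ε. -/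

import Mathlib

open Real Filter

noncomputable def cf (N j : ℕ) : ℝ := ((2*N).choose j : ℝ) / ((2*N).choose N : ℝ)
noncomputable def bt (τ : ℝ) (N j : ℕ) : ℝ := ((j:ℝ) - N) * τ
noncomputable def GG (N : ℕ) (τ u : ℝ) : ℝ :=
  (4^N / ((2*N).choose N : ℝ)) * ((1 + Real.cos (τ * u)) / 2)^N
noncomputable def psi (N : ℕ) (τ u : ℝ) : ℂ :=
  ∑ j ∈ Finset.range (2*N+1), (cf N j : ℂ) * (Complex.exp (Complex.I * bt τ N j * u) / (1 + Complex.I * bt τ N j))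

lemma choose_pos' (N : ℕ) : (0:ℝ) < ((2*N).choose N : ℝ) := by
  exact_mod_cast Nat.choose_pos (by omega)

lemma GG_nonneg (N : ℕ) (τ u : ℝ) : 0 ≤ GG N τ u := by
  unfold GG
  have h := choose_pos' N
  have := Real.neg_one_le_cos (τ * u)
  have : 0 ≤ (1 + Real.cos (τ * u)) / 2 := by linarith
  positivity

lemma GG_le (N : ℕ) (τ u : ℝ) : GG N τ u ≤ 4^N / ((2*N).choose N : ℝ) := by
  unfold GG
  have h := choose_pos' N
  have := Real.neg_one_le_cos (τ * u)
  have := Real.cos_le_one (τ * u)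
  have h1 : ((1 + Real.cos (τ * u)) / 2)^N ≤ 1 := pow_le_one₀ (by linarith) (by linarith)
  exact mul_le_of_le_one_right (by positivity) h1

lemma GG_eq (N : ℕ) (τ u : ℝ) : (GG N τ u : ℂ) =
    ∑ j ∈ Finset.range (2*N+1), (cf N j : ℂ) * Complex.exp (Complex.I * bt τ N j * u) := by
  have h := choose_pos' N
  have hc : ((2*N).choose N : ℂ) ≠ 0 := by
    exact_mod_cast h.ne'
  set z : ℂ := Complex.exp (Complex.I * τ * u) with hz
  have hz0 : z ≠ 0 := Complex.exp_ne_zero _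
  have hcos : (Complex.cos (τ * u)) = (z + z⁻¹) / 2 := by
    rw [Complex.cos, hz, ← Complex.exp_neg]; ring_nf
  have h1 : ((1 + Complex.cos (τ * u)) / 2)^N = (z + 1)^(2*N) / (4^N * z^N) := by
    rw [hcos, pow_mul, ← mul_pow, ← div_pow]; congr 1; field_simp; ring
  have h2 : ∀ j : ℕ, Complex.exp (Complex.I * bt τ N j * u) = z^j / z^N := by
    intro j
    rw [hz, ← Complex.exp_nat_mul, ← Complex.exp_nat_mul, ← Complex.exp_sub]
    congr 1; unfold bt; push_cast; ring
  unfold GG cf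
  push_cast
  rw [h1, add_pow]
  simp_rw [h2]
  rw [Finset.sum_div, Finset.mul_sum]
  apply Finset.sum_congr rfl
  intro j _
  field_simp
  simp

lemma mean_lem (α : ℝ) : Tendsto (fun n : ℕ => (∑ k ∈ Finset.Icc 1 n, Complex.exp (Complex.I * α * Real.log k)) / n
    - Complex.exp (Complex.I * α * Real.log n) / (1 + Complex.I * α)) atTop (nhds 0) := by
  have hne : (1 + Complex.I * α : ℂ) ≠ 0 := by
    intro h; have := congrArg Complex.re h; simp at this
  set E : ℕ → ℂ := fun k => Complex.exp (Complex.I * α * Real.log k) with hE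
  have hEn : ∀ k, ‖E k‖ = 1 := by
    intro k; simp only [hE]
    rw [show Complex.I * α * Real.log k = ((α * Real.log k : ℝ) : ℂ) * Complex.I by push_cast; ring]
    exact Complex.norm_exp_ofReal_mul_I _
  -- derivative at 0 of (1+t)^(1+iα)
  set f : ℝ → ℂ := fun t => Complex.exp ((1 + Complex.I * α) * Real.log (1 + t)) with hf
  have hd : HasDerivAt f (1 + Complex.I * α) 0 := by
    have h1 : HasDerivAt (fun t : ℝ => Real.log (1 + t)) 1 0 := by
      have := ((hasDerivAt_id (0:ℝ)).const_add 1).log (by simp)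
      simpa using this
    have := (h1.ofReal_comp.const_mul (1 + Complex.I * α : ℂ)).cexp
    simpa using this
  have hs : Tendsto (fun n : ℕ => (n : ℝ) • (f ((n:ℝ)⁻¹) - f 0)) atTop (nhds (1 + Complex.I * α)) := by
    have h1 := hd.tendsto_slope_zero
    have h2 : Tendsto (fun n : ℕ => ((n:ℝ)⁻¹)) atTop (nhdsWithin 0 {0}ᶜ) := by
      rw [tendsto_nhdsWithin_iff]
      refine ⟨tendsto_inv_atTop_nhds_zero_nat, ?_⟩
      filter_upwards [eventually_gt_atTop 0] with n hn
      simp; omega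
    have := h1.comp h2
    refine this.congr ?_
    intro n; simp
  -- the difference
  set D : ℕ → ℂ := fun n => ((n+1:ℕ):ℂ) * E (n+1) - n * E n - (1 + Complex.I * α) * E (n+1) with hD
  have hD0 : Tendsto D atTop (nhds 0) := by
    have hf0 : f 0 = 1 := by simp [hf]
    have hfc : Tendsto (fun n : ℕ => f ((n:ℝ)⁻¹)) atTop (nhds 1) := by
      have := hd.continuousAt.tendsto.comp tendsto_inv_atTop_nhds_zero_nat
      rw [hf0] at this; exact this
    have hr : Tendsto (fun n : ℕ => ((n:ℝ)/(n+1) : ℝ)) atTop (nhds 1) := tendsto_natCast_div_add_atTop (1:ℝ)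
    have hr' : Tendsto (fun n : ℕ => (((n:ℝ)/(n+1) : ℝ) : ℂ)) atTop (nhds 1) := by
      have := (Complex.continuous_ofReal.tendsto 1).comp hr
      rw [Complex.ofReal_one] at this
      exact this
    have key : Tendsto (fun n : ℕ => (n : ℝ) • (f ((n:ℝ)⁻¹) - f 0) - (1 + Complex.I * α) * (f ((n:ℝ)⁻¹) * (((n:ℝ)/(n+1) : ℝ) : ℂ))) atTop (nhds 0) := by
      have := hs.sub ((hfc.mul hr').const_mul (1 + Complex.I * α : ℂ))
      simpa using this
    rw [tendsto_zero_iff_norm_tendsto_zero] at key ⊢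
    refine key.congr' ?_
    filter_upwards [eventually_gt_atTop 0] with n hn
    have hn' : (0:ℝ) < n := by exact_mod_cast hn
    have hfE : f ((n:ℝ)⁻¹) * n * E n = ((n+1:ℕ):ℂ) * E (n+1) := by
      have hl : Real.log (1 + (n:ℝ)⁻¹) = Real.log ((n+1:ℕ):ℝ) - Real.log n := by
        rw [← Real.log_div (by positivity) (by positivity)]
        congr 1; push_cast; field_simp
      have e1 : ((n:ℕ):ℂ) = Complex.exp (Real.log n) := by
        rw [← Complex.ofReal_exp, Real.exp_log hn']; simp
      have e2 : ((n+1:ℕ):ℂ) = Complex.exp (Real.log ((n+1:ℕ):ℝ)) := by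
        rw [← Complex.ofReal_exp, Real.exp_log (by positivity)]; simp
      rw [e2]
      conv_lhs => rw [e1]
      simp only [hf, hE, hl]
      rw [← Complex.exp_add, ← Complex.exp_add, ← Complex.exp_add]
      congr 1; push_cast; ring
    have hn1 : (n:ℂ) + 1 ≠ 0 := by exact_mod_cast (Nat.succ_ne_zero n)
    have hfE2 : f ((n:ℝ)⁻¹) * (n / (n+1)) * E n = E (n+1) := by
      push_cast at hfE
      rw [mul_div_assoc', div_mul_eq_mul_div, div_eq_iff hn1, hfE]; ring
    have : D n = ((n : ℝ) • (f ((n:ℝ)⁻¹) - f 0) - (1 + Complex.I * α) * (f ((n:ℝ)⁻¹) * (((n:ℝ)/(n+1) : ℝ) : ℂ))) * E n := by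
      simp only [hD]
      rw [← hfE, ← hfE2, hf0, Complex.real_smul]; push_cast; ring
    rw [this, norm_mul, hEn, mul_one]
  have hC := hD0.cesaro_smul
  have hC2 : Tendsto (fun n : ℕ => -(1 + Complex.I * α : ℂ)⁻¹ * ((n⁻¹ : ℝ) • ∑ i ∈ Finset.range n, D i)) atTop (nhds 0) := by
    simpa using hC.const_mul (-(1 + Complex.I * α : ℂ)⁻¹)
  refine hC2.congr' ?_
  filter_upwards [eventually_gt_atTop 0] with n hn
  have hsum : ∀ n : ℕ, ∑ i ∈ Finset.range n, D i = n * E n - (1 + Complex.I * α) * ∑ k ∈ Finset.Icc 1 n, E k := by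
    intro n
    induction n with
    | zero => simp
    | succ n ih =>
      rw [Finset.sum_range_succ, ih, Finset.sum_Icc_succ_top (by omega)]
      simp only [hD]; ring
  rw [hsum, Complex.real_smul]
  have : (n:ℂ) ≠ 0 := by exact_mod_cast hn.ne'
  rw [Complex.ofReal_inv, Complex.ofReal_natCast]
  change _ = _ - E n / _
  field_simp
  ring

lemma avg_lem (N : ℕ) (τ : ℝ) : Tendsto (fun n : ℕ => (((∑ k ∈ Finset.Icc 1 n, GG N τ (Real.log k)) / n : ℝ) : ℂ)
    - psi N τ (Real.log n)) atTop (nhds 0) := by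
  have h : Tendsto (fun n : ℕ => ∑ j ∈ Finset.range (2*N+1), (cf N j : ℂ) * ((∑ k ∈ Finset.Icc 1 n, Complex.exp (Complex.I * bt τ N j * Real.log k)) / n
    - Complex.exp (Complex.I * bt τ N j * Real.log n) / (1 + Complex.I * bt τ N j))) atTop (nhds 0) := by
    have := tendsto_finsetSum (Finset.range (2*N+1)) (fun j _ => (mean_lem (bt τ N j)).const_mul (cf N j : ℂ))
    simpa using this
  refine h.congr ?_
  intro n
  unfold psi
  rw [Complex.ofReal_div, Complex.ofReal_sum, Complex.ofReal_natCast]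
  simp_rw [GG_eq, mul_sub]
  rw [Finset.sum_sub_distrib, Finset.sum_comm, Finset.sum_div]
  congr 1
  apply Finset.sum_congr rfl
  intro j _
  rw [← Finset.mul_sum]; ring

lemma psi_cont (N : ℕ) (τ : ℝ) : Continuous (psi N τ) := by
  unfold psi
  refine continuous_finsetSum _ fun j _ => ?_
  have : (1 + Complex.I * bt τ N j : ℂ) ≠ 0 := by
    intro h; have := congrArg Complex.re h; simp at this
  fun_prop

lemma exp_per (N j : ℕ) (τ : ℝ) (hτ : 0 < τ) (k : ℤ) :
    Complex.exp (Complex.I * bt τ N j * (k * (2*π/τ) : ℝ)) = 1 := by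
  rw [Complex.exp_eq_one_iff]
  refine ⟨((j:ℤ) - N) * k, ?_⟩
  have : (τ:ℂ) ≠ 0 := by exact_mod_cast hτ.ne'
  unfold bt; push_cast; field_simp

lemma psi_per (N : ℕ) (τ : ℝ) (hτ : 0 < τ) (k : ℕ) (u : ℝ) : psi N τ (u - k * (2*π/τ)) = psi N τ u := by
  unfold psi
  apply Finset.sum_congr rfl
  intro j _
  have := exp_per N j τ hτ k
  congr 2
  rw [← mul_one (Complex.exp (Complex.I * bt τ N j * ((u - k * (2*π/τ) : ℝ):ℂ))), ← this, ← Complex.exp_add]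
  congr 1; push_cast; ring

lemma floor_lem : Tendsto (fun x : ℝ => Real.log ⌊x⌋₊ - Real.log x) atTop (nhds 0) := by
  have h := tendsto_nat_floor_div_atTop (R := ℝ)
  have h2 := (Real.continuousAt_log (one_ne_zero)).tendsto.comp h
  rw [Real.log_one] at h2
  refine h2.congr' ?_
  filter_upwards [eventually_ge_atTop 1] with x hx
  have : 0 < ⌊x⌋₊ := Nat.floor_pos.mpr hx
  simp only [Function.comp]
  rw [Real.log_div (by positivity) (by positivity)]

lemma sub_lem (N : ℕ) (τ : ℝ) (hτ : 0 < τ) (δ : ℝ) : Tendsto (fun k : ℕ =>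
    (((∑ i ∈ Finset.Icc 1 ⌊Real.exp (k * (2*π/τ) + δ)⌋₊, GG N τ (Real.log i)) / (⌊Real.exp (k * (2*π/τ) + δ)⌋₊ : ℝ) : ℝ) : ℂ)) atTop
    (nhds (psi N τ δ)) := by
  have hlin : Tendsto (fun k : ℕ => (k:ℝ) * (2*π/τ) + δ) atTop atTop :=
    tendsto_atTop_add_const_right _ _ (tendsto_natCast_atTop_atTop.atTop_mul_const (by positivity))
  have hx := Real.tendsto_exp_atTop.comp hlin
  have hn := tendsto_nat_floor_atTop.comp hx
  have h1 := (avg_lem N τ).comp hn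
  have h2 : Tendsto (fun k : ℕ => Real.log ⌊Real.exp (k * (2*π/τ) + δ)⌋₊ - k * (2*π/τ)) atTop (nhds δ) := by
    have := (floor_lem.comp hx).add_const δ
    rw [zero_add] at this
    refine this.congr ?_
    intro k
    simp only [Function.comp, Real.log_exp]; ring
  have h3 := (psi_cont N τ).continuousAt.tendsto.comp h2
  have h4 := h1.add h3
  rw [zero_add] at h4
  refine h4.congr ?_
  intro k
  simp only [Function.comp]
  rw [psi_per N τ hτ]; ring

lemma zeta_mero (s : ℂ) : MeromorphicAt riemannZeta s := by
  have han : ∀ z : ℂ, z ≠ 1 → AnalyticAt ℂ riemannZeta z := by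
    intro z hz
    have : DifferentiableOn ℂ riemannZeta {1}ᶜ := fun w hw =>
      (differentiableAt_riemannZeta hw).differentiableWithinAt
    exact this.analyticAt (isOpen_compl_singleton.mem_nhds hz)
  by_cases h : s = 1
  · subst h
    set g : ℂ → ℂ := Function.update (fun z => (z - 1) * riemannZeta z) 1 1 with hg
    have hga : AnalyticAt ℂ g 1 := by
      apply Complex.analyticAt_of_differentiable_on_punctured_nhds_of_continuousAt
      · filter_upwards [self_mem_nhdsWithin] with z hz
        have h1 : DifferentiableAt ℂ (fun z => (z - 1) * riemannZeta z) z :=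
          (differentiableAt_id.sub_const 1).mul (differentiableAt_riemannZeta hz)
        refine h1.congr_of_eventuallyEq ?_
        filter_upwards [isOpen_compl_singleton.mem_nhds hz] with w hw
        exact Function.update_of_ne hw _ _
      · exact continuousAt_update_same.mpr riemannZeta_residue_one
    have : MeromorphicAt (fun z => g z / (z - 1)) 1 :=
      hga.meromorphicAt.div (by fun_prop)
    refine this.congr ?_
    filter_upwards [self_mem_nhdsWithin] with z hz
    have hz' : z - 1 ≠ 0 := sub_ne_zero.mpr hz
    rw [hg, Function.update_of_ne hz]
    field_simp
  · exact (han s h).meromorphicAt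

lemma zeta_an (s : ℂ) (h : s ≠ 1) : AnalyticAt ℂ riemannZeta s := by
  have : DifferentiableOn ℂ riemannZeta {1}ᶜ := fun w hw =>
    (differentiableAt_riemannZeta hw).differentiableWithinAt
  exact this.analyticAt (isOpen_compl_singleton.mem_nhds h)

noncomputable def AA (N : ℕ) (τ : ℝ) (s : ℂ) : ℂ :=
  ∑ j ∈ Finset.range (2*N+1), (cf N j : ℂ) * riemannZeta (s - Complex.I * bt τ N j)

lemma AA_mero (N : ℕ) (τ : ℝ) (s : ℂ) : MeromorphicAt (AA N τ) s := by
  have : AA N τ = ∑ j ∈ Finset.range (2*N+1), fun s => (cf N j : ℂ) * riemannZeta (s - Complex.I * bt τ N j) := by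
    ext s; simp [AA]
  rw [this]
  refine MeromorphicAt.sum fun j _ => ?_
  refine (MeromorphicAt.const _ _).mul ?_
  refine MeromorphicAt.comp_analyticAt (f := riemannZeta) (zeta_mero _) ?_
  fun_prop

lemma AA_an (N : ℕ) (τ T : ℝ) (hτ : T < τ) (hT : 0 < T) (s : ℂ) (hs : s ≠ 1) (h : |s.im| ≤ T) : AnalyticAt ℂ (AA N τ) s := by
  unfold AA
  refine Finset.analyticAt_fun_sum _ fun j _ => ?_
  refine analyticAt_const.mul ?_
  refine AnalyticAt.fun_comp (g := riemannZeta) (zeta_an _ ?_) (by fun_prop)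
  intro h1
  by_cases hj : j = N
  · subst hj; simp [bt] at h1; exact hs h1
  · have := congrArg Complex.im h1
    simp at this
    have h2 : s.im = bt τ N j := by linarith
    rw [h2, bt, abs_mul, abs_of_pos (hT.trans hτ)] at h
    have h3 : (1:ℝ) ≤ |(j:ℝ) - N| := by
      have : (1:ℤ) ≤ |(j:ℤ) - N| := Int.one_le_abs (by omega)
      exact_mod_cast this
    nlinarith

lemma AA_res (N : ℕ) (τ : ℝ) (hτ : 0 < τ) : Tendsto (fun s : ℂ => (s - 1) * AA N τ s) (nhdsWithin 1 {(1 : ℂ)}ᶜ) (nhds 1) := by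
  have h : Tendsto (fun s : ℂ => ∑ j ∈ Finset.range (2*N+1), (cf N j : ℂ) * ((s-1) * riemannZeta (s - Complex.I * bt τ N j)))
      (nhdsWithin 1 {(1 : ℂ)}ᶜ) (nhds (∑ j ∈ Finset.range (2*N+1), (cf N j : ℂ) * (if j = N then 1 else 0))) := by
    refine tendsto_finsetSum _ fun j _ => Tendsto.const_mul _ ?_
    split_ifs with hj
    · subst hj; simpa [bt] using riemannZeta_residue_one
    · have hne : (1 : ℂ) - Complex.I * bt τ N j ≠ 1 := by
        have : (j:ℂ) - N ≠ 0 := sub_ne_zero.mpr (by exact_mod_cast hj)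
        have h2 : (τ:ℂ) ≠ 0 := by exact_mod_cast hτ.ne'
        simp [bt, this, h2]
      have : ContinuousAt (fun s : ℂ => (s-1) * riemannZeta (s - Complex.I * bt τ N j)) 1 := by
        refine ContinuousAt.mul (by fun_prop) ?_
        exact ContinuousAt.comp' (g := riemannZeta) (differentiableAt_riemannZeta hne).continuousAt (by fun_prop)
      have h2 := this.tendsto.mono_left (nhdsWithin_le_nhds (s := {(1:ℂ)}ᶜ))
      simpa using h2
  have hc : (∑ j ∈ Finset.range (2*N+1), (cf N j : ℂ) * (if j = N then 1 else 0)) = 1 := by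
    have := choose_pos' N
    simp only [mul_ite, mul_one, mul_zero, Finset.sum_ite_eq', Finset.mem_range]
    rw [if_pos (by omega), cf, div_self this.ne']; simp
  rw [hc] at h
  refine h.congr fun s => ?_
  unfold AA
  rw [Finset.mul_sum]
  exact Finset.sum_congr rfl fun j _ => by ring

lemma AA_sum (N : ℕ) (τ : ℝ) (s : ℂ) (hs : 1 < s.re) :
    HasSum (fun n : ℕ => (GG N τ (Real.log n) : ℂ) * (n : ℂ) ^ (-s)) (AA N τ s) := by
  have h : HasSum (fun n : ℕ => ∑ j ∈ Finset.range (2*N+1), (cf N j : ℂ) * (1 / (n:ℂ)^(s - Complex.I * bt τ N j))) (AA N τ s) := by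
    refine hasSum_sum fun j _ => HasSum.mul_left _ ?_
    have hre : 1 < (s - Complex.I * bt τ N j).re := by simpa using hs
    rw [zeta_eq_tsum_one_div_nat_cpow hre]
    exact ((Complex.summable_one_div_nat_cpow).mpr hre).hasSum
  refine h.congr_fun ?_
  intro n
  rw [GG_eq, Finset.sum_mul]
  refine Finset.sum_congr rfl fun j _ => ?_
  rw [mul_assoc]
  congr 1
  rcases Nat.eq_zero_or_pos n with rfl | hn
  · have h1 : -s ≠ 0 := by
      intro h; rw [neg_eq_zero] at h; rw [h] at hs; simp at hs; linarith
    have h2 : s - Complex.I * bt τ N j ≠ 0 := by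
      intro h; have := congrArg Complex.re h; simp at this; linarith
    simp only [Nat.cast_zero]
    rw [Complex.zero_cpow h1, Complex.zero_cpow h2]; simp
  · have hn0 : (n:ℂ) ≠ 0 := by exact_mod_cast hn.ne'
    rw [one_div, ← Complex.cpow_neg, Complex.cpow_def_of_ne_zero hn0, Complex.cpow_def_of_ne_zero hn0, ← Complex.exp_add, Complex.ofReal_log (by positivity)]
    congr 1; push_cast; ring

lemma AA_abs (N : ℕ) (τ : ℝ) (s : ℂ) (hs : 1 < s.re) :
    Summable (fun n : ℕ => ‖(GG N τ (Real.log n) : ℂ) * (n : ℂ) ^ (-s)‖) :=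
  (AA_sum N τ s hs).summable.norm

-- integrals
lemma psi_int (N : ℕ) (τ : ℝ) (hτ : 0 < τ) (δ : ℝ) :
    ((∫ v in (δ - 2*π/τ)..δ, GG N τ v * Real.exp (v - δ) : ℝ) : ℂ) = psi N τ δ * (1 - Real.exp (-(2*π/τ))) := by
  rw [← intervalIntegral.integral_ofReal]
  have h : ∀ v : ℝ, ((GG N τ v * Real.exp (v - δ) : ℝ) : ℂ) =
      ∑ j ∈ Finset.range (2*N+1), (cf N j : ℂ) * Complex.exp (-δ) * Complex.exp ((1 + Complex.I * bt τ N j) * v) := by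
    intro v
    rw [Complex.ofReal_mul, GG_eq, Finset.sum_mul]
    refine Finset.sum_congr rfl fun j _ => ?_
    rw [Complex.ofReal_exp, mul_assoc (cf N j : ℂ), mul_assoc (cf N j : ℂ), ← Complex.exp_add, ← Complex.exp_add]
    congr 2; push_cast; ring
  simp_rw [h]
  rw [intervalIntegral.integral_finsetSum]
  · unfold psi
    rw [Finset.sum_mul]
    refine Finset.sum_congr rfl fun j _ => ?_
    have hne : (1 + Complex.I * bt τ N j : ℂ) ≠ 0 := by
      intro h; have := congrArg Complex.re h; simp at this
    rw [intervalIntegral.integral_const_mul, integral_exp_mul_complex hne]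
    have hp := exp_per N j τ hτ (-1)
    have e1 : Complex.exp (-δ) * Complex.exp ((1 + Complex.I * bt τ N j) * δ) = Complex.exp (Complex.I * bt τ N j * δ) := by
      rw [← Complex.exp_add]; congr 1; ring
    have e2 : Complex.exp (-δ) * Complex.exp ((1 + Complex.I * bt τ N j) * (δ - 2*π/τ : ℝ)) = Complex.exp (Complex.I * bt τ N j * δ) * Real.exp (-(2*π/τ)) := by
      conv_rhs => rw [← mul_one (Complex.exp (Complex.I * bt τ N j * δ) * Real.exp (-(2*π/τ))), ← hp]
      rw [Complex.ofReal_exp, ← Complex.exp_add, ← Complex.exp_add, ← Complex.exp_add]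
      congr 1; push_cast; ring
    rw [mul_assoc, mul_div_assoc', mul_sub, e1, e2]
    ring
  · intro j _
    apply Continuous.intervalIntegrable
    fun_prop

lemma GG_int (N : ℕ) (τ : ℝ) (hτ : 0 < τ) (δ : ℝ) :
    (∫ v in (δ - 2*π/τ)..δ, GG N τ v) = 2*π/τ := by
  have : ((∫ v in (δ - 2*π/τ)..δ, GG N τ v : ℝ) : ℂ) = (2*π/τ : ℝ) := by
    rw [← intervalIntegral.integral_ofReal]
    simp_rw [GG_eq]
    rw [intervalIntegral.integral_finsetSum]
    · rw [Finset.sum_eq_single N]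
      · have := choose_pos' N
        simp [bt, cf, this.ne']
      · intro j _ hj
        have hne : (Complex.I * bt τ N j : ℂ) ≠ 0 := by
          have : (j:ℂ) - N ≠ 0 := sub_ne_zero.mpr (by exact_mod_cast hj)
          have h2 : (τ:ℂ) ≠ 0 := by exact_mod_cast hτ.ne'
          simp [bt, this, h2]
        rw [intervalIntegral.integral_const_mul, integral_exp_mul_complex hne]
        have hp := exp_per N j τ hτ (-1)
        have e2 : Complex.exp (Complex.I * bt τ N j * (δ - 2*π/τ : ℝ)) = Complex.exp (Complex.I * bt τ N j * δ) := by
          rw [← mul_one (Complex.exp (Complex.I * bt τ N j * δ)), ← hp, ← Complex.exp_add]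
          congr 1; push_cast; ring
        rw [e2]; simp
      · intro h; simp at h; omega
    · intro j _
      apply Continuous.intervalIntegrable
      fun_prop
  exact_mod_cast this

lemma peak (τ : ℝ) (hτ : 0 < τ) (δ : ℝ) (h0 : 0 < δ) (h1 : δ < 2*π/τ) :
    Tendsto (fun N : ℕ => ∫ v in (δ - 2*π/τ)..δ, GG N τ v * Real.exp (v - δ)) atTop (nhds (2*π/τ * Real.exp (-δ))) := by
  have hle : δ - 2*π/τ ≤ δ := by linarith
  set c : ℝ → ℝ := fun v => (1 + Real.cos (τ * v)) / 2 with hc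
  have hcc : Continuous c := by simp only [hc]; fun_prop
  have hcn : ∀ v, 0 ≤ c v := fun v => by
    have := Real.neg_one_le_cos (τ * v); simp only [hc]; linarith
  have hc0 : c 0 = 1 := by simp [hc]
  have P := tendsto_setIntegral_pow_smul_of_unique_maximum_of_isCompact_of_continuousOn (μ := MeasureTheory.volume)
    (s := Set.Icc (δ - 2*π/τ) δ) (x₀ := 0) (c := c) (g := fun v => Real.exp (v - δ)) isCompact_Icc hcc.continuousOn
    (by
      intro y hy hy0
      rw [hc0]
      simp only [hc]
      have hlt : Real.cos (τ * y) < 1 := by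
        refine lt_of_le_of_ne (Real.cos_le_one _) ?_
        intro h
        have hb : 2*π/τ * τ = 2*π := by field_simp
        have := (Real.cos_eq_one_iff_of_lt_of_lt (x := τ * y) (by nlinarith [hy.1, hy.2]) (by nlinarith [hy.1, hy.2])).mp h
        rcases mul_eq_zero.mp this with h | h
        · exact hτ.ne' h
        · exact hy0 h
      linarith)
    (fun x _ => hcn x) (by rw [hc0]; norm_num)
    (by rw [interior_Icc]; exact subset_closure ⟨by linarith, h0⟩)
    (by fun_prop)
  have P2 := P.const_mul (2*π/τ)
  simp only [zero_sub] at P2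
  refine P2.congr fun N => ?_
  have hK : (0:ℝ) < 4^N / ((2*N).choose N : ℝ) := by have := choose_pos' N; positivity
  have hG := GG_int N τ hτ δ
  unfold GG at hG ⊢
  simp_rw [mul_assoc] at hG ⊢
  rw [intervalIntegral.integral_const_mul] at hG ⊢
  rw [MeasureTheory.integral_Icc_eq_integral_Ioc, MeasureTheory.integral_Icc_eq_integral_Ioc,
    ← intervalIntegral.integral_of_le hle, ← intervalIntegral.integral_of_le hle]
  simp only [smul_eq_mul, hc]
  set X := ∫ x in (δ - 2*π/τ)..δ, ((1 + Real.cos (τ * x)) / 2)^N with hX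
  simp only [mul_div_assoc] at hG hX ⊢
  rw [← hX] at *
  have hX0 : X ≠ 0 := by
    intro h
    rw [h, mul_zero] at hG
    have : 0 < 2 * (π/τ) := by positivity
    linarith
  rw [← hG]
  field_simp

lemma limit_params (T : ℝ) (hT : 1 ≤ T) (ε : ℝ) (hε : 0 < ε) : ∃ η : ℝ, 0 < η ∧ η < 2*π/(T+η) ∧
    π / T * (Real.cosh (π / T) / Real.sinh (π / T)) + π / T - ε < 2*π/(T+η) * Real.exp (-η) / (1 - Real.exp (-(2*π/(T+η)))) ∧
    2*π/(T+η) * Real.exp (-(2*π/(T+η) - η)) / (1 - Real.exp (-(2*π/(T+η)))) <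
    π / T * (Real.cosh (π / T) / Real.sinh (π / T)) - π / T + ε := by
  have hT0 : 0 < T := by linarith
  set y := π / T with hy
  have hy0 : 0 < y := by positivity
  have hyy : 2 * π / T = 2 * y := by rw [hy]; ring
  have hs : 0 < Real.sinh y := Real.sinh_pos_iff.mpr hy0
  have he : Real.exp (-(2*y)) < 1 := by rw [Real.exp_lt_one_iff]; linarith
  have hexp : Real.exp (-(2*y)) = Real.exp (-y) * Real.exp (-y) := by rw [← Real.exp_add]; ring_nf
  have hee : Real.exp y * Real.exp (-y) = 1 := by rw [← Real.exp_add]; simp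
  have hsub : Real.exp y - Real.exp (-y) ≠ 0 := by rw [Real.sinh_eq] at hs; intro h; rw [h] at hs; simp at hs
  have hE1 : 2 * y / (1 - Real.exp (-(2*y))) = y * (Real.cosh y / Real.sinh y) + y := by
    have : 1 - Real.exp (-(2*y)) = Real.exp (-y) * (2 * Real.sinh y) := by
      rw [Real.sinh_eq, hexp]; linear_combination -hee
    have hep := Real.exp_pos (-y)
    rw [this, div_eq_iff (by positivity)]
    have : y * (Real.cosh y / Real.sinh y) + y = y * Real.exp y / Real.sinh y := by
      rw [← Real.cosh_add_sinh]; field_simp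
    rw [this]; field_simp; linear_combination -hee
  have hE2 : 2 * y * Real.exp (-(2*y)) / (1 - Real.exp (-(2*y))) = y * (Real.cosh y / Real.sinh y) - y := by
    have h1 : 2 * y * Real.exp (-(2*y)) / (1 - Real.exp (-(2*y))) = 2 * y / (1 - Real.exp (-(2*y))) - 2 * y := by
      have : 1 - Real.exp (-(2*y)) ≠ 0 := by linarith
      field_simp; ring
    rw [h1, hE1]; ring
  have hne : T + 0 ≠ 0 := by linarith
  have hden : 1 - Real.exp (-(2*π/(T+0))) ≠ 0 := by
    rw [add_zero, hyy]; linarith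
  have c1 : ContinuousAt (fun η : ℝ => 2*π/(T+η) - η) 0 := by fun_prop (disch := assumption)
  have c2 : ContinuousAt (fun η : ℝ => 2*π/(T+η) * Real.exp (-η) / (1 - Real.exp (-(2*π/(T+η))))) 0 := by
    fun_prop (disch := assumption)
  have c3 : ContinuousAt (fun η : ℝ => 2*π/(T+η) * Real.exp (-(2*π/(T+η) - η)) / (1 - Real.exp (-(2*π/(T+η))))) 0 := by
    fun_prop (disch := assumption)
  have e1 := c1.tendsto.eventually (lt_mem_nhds (a := 0) (by simp; positivity))
  have e2 := c2.tendsto.eventually (lt_mem_nhds (a := y * (Real.cosh y / Real.sinh y) + y - ε) (by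
    simp only [add_zero, hyy, neg_zero, Real.exp_zero, mul_one, hE1]; linarith))
  have e3 := c3.tendsto.eventually (gt_mem_nhds (a := y * (Real.cosh y / Real.sinh y) - y + ε) (by
    simp only [add_zero, hyy, sub_zero, hE2]; linarith))
  have e := ((e1.and (e2.and e3)).filter_mono (nhdsWithin_le_nhds (s := Set.Ioi (0:ℝ)))).and (self_mem_nhdsWithin (s := Set.Ioi (0:ℝ)))
  obtain ⟨η, ⟨h1, h2, h3⟩, h4⟩ := e.exists
  exact ⟨η, h4, by linarith, h2, h3⟩

lemma sub_lem2 (N : ℕ) (τ : ℝ) (hτ : 0 < τ) (δ : ℝ) : Tendsto (fun k : ℕ =>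
    (∑ i ∈ Finset.Icc 1 ⌊Real.exp (k * (2*π/τ) + δ)⌋₊, GG N τ (Real.log i)) / (⌊Real.exp (k * (2*π/τ) + δ)⌋₊ : ℝ)) atTop
    (nhds ((∫ v in (δ - 2*π/τ)..δ, GG N τ v * Real.exp (v - δ)) / (1 - Real.exp (-(2*π/τ))))) := by
  have h := (Complex.continuous_re.tendsto _).comp (sub_lem N τ hτ δ)
  have hpos : Real.exp (-(2*π/τ)) < 1 := by
    rw [Real.exp_lt_one_iff]; have : 0 < 2*π/τ := by positivity
    linarith
  have he : psi N τ δ = (((∫ v in (δ - 2*π/τ)..δ, GG N τ v * Real.exp (v - δ)) / (1 - Real.exp (-(2*π/τ))) : ℝ) : ℂ) := by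
    rw [Complex.ofReal_div, psi_int N τ hτ, Complex.ofReal_sub, Complex.ofReal_one, mul_div_assoc, div_self, mul_one]
    rw [← Complex.ofReal_one, ← Complex.ofReal_sub]
    exact_mod_cast (by linarith : 1 - Real.exp (-(2*π/τ)) ≠ 0)
  rw [he, Complex.ofReal_re] at h
  exact h

lemma floor_tend (τ : ℝ) (hτ : 0 < τ) (δ : ℝ) :
    Tendsto (fun k : ℕ => ((⌊Real.exp (k * (2*π/τ) + δ)⌋₊ : ℕ) : ℝ)) atTop atTop := by
  have hlin : Tendsto (fun k : ℕ => (k:ℝ) * (2*π/τ) + δ) atTop atTop :=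
    tendsto_atTop_add_const_right _ _ (tendsto_natCast_atTop_atTop.atTop_mul_const (by positivity))
  exact tendsto_natCast_atTop_atTop.comp (tendsto_nat_floor_atTop.comp (Real.tendsto_exp_atTop.comp hlin))

theorem stmt_3 (T : ℝ) (hT : 1 ≤ T) (ε : ℝ) (hε : 0 < ε) :
    ∃ (a : ℕ → ℝ) (A : ℂ → ℂ),
      (∀ n, 0 ≤ a n) ∧
      (∀ s : ℂ, MeromorphicAt A s) ∧
      (∀ s : ℂ, 1 < s.re →
        Summable (fun n : ℕ => ‖(a n : ℂ) * (n : ℂ) ^ (-s)‖) ∧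
        HasSum (fun n : ℕ => (a n : ℂ) * (n : ℂ) ^ (-s)) (A s)) ∧
      (∀ s : ℂ, s ≠ 1 → |s.im| ≤ T → AnalyticAt ℂ A s) ∧
      Filter.Tendsto (fun s : ℂ => (s - 1) * A s) (nhdsWithin 1 {(1 : ℂ)}ᶜ) (nhds 1) ∧
      Filter.limsup (fun x : ℝ => (∑ n ∈ Finset.Icc 1 ⌊x⌋₊, a n) / x) Filter.atTop
        > π / T * (Real.cosh (π / T) / Real.sinh (π / T)) + π / T - ε ∧
      Filter.liminf (fun x : ℝ => (∑ n ∈ Finset.Icc 1 ⌊x⌋₊, a n) / x) Filter.atTop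
        < π / T * (Real.cosh (π / T) / Real.sinh (π / T)) - π / T + ε := by
  obtain ⟨η, hη, hη2, hup, hlo⟩ := limit_params T hT ε hε
  have hT0 : 0 < T := by linarith
  set τ := T + η with hτd
  have hτ : 0 < τ := by linarith
  have hp1 := (peak τ hτ η hη hη2).div_const (1 - Real.exp (-(2*π/τ)))
  have hp2 := (peak τ hτ (2*π/τ - η) (by linarith) (by linarith)).div_const (1 - Real.exp (-(2*π/τ)))
  obtain ⟨N, hN1, hN2⟩ := ((hp1.eventually (lt_mem_nhds hup)).and (hp2.eventually (gt_mem_nhds hlo))).exists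
  have hb1 : IsBoundedUnder (· ≤ ·) atTop (fun x : ℝ => (∑ n ∈ Finset.Icc 1 ⌊x⌋₊, GG N τ (Real.log n)) / x) := by
    refine isBoundedUnder_of_eventually_le (a := 4^N / ((2*N).choose N : ℝ)) ?_
    filter_upwards [eventually_gt_atTop 0] with x hx
    rw [div_le_iff₀ hx]
    have hK : (0:ℝ) ≤ 4^N / ((2*N).choose N : ℝ) := by positivity
    calc _ ≤ ∑ n ∈ Finset.Icc 1 ⌊x⌋₊, 4^N / ((2*N).choose N : ℝ) := Finset.sum_le_sum fun i _ => GG_le _ _ _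
      _ = ⌊x⌋₊ * (4^N / ((2*N).choose N : ℝ)) := by simp
      _ ≤ x * (4^N / ((2*N).choose N : ℝ)) := by gcongr; exact Nat.floor_le hx.le
      _ = _ := by ring
  have hb2 : IsBoundedUnder (· ≥ ·) atTop (fun x : ℝ => (∑ n ∈ Finset.Icc 1 ⌊x⌋₊, GG N τ (Real.log n)) / x) := by
    refine isBoundedUnder_of_eventually_ge (a := 0) ?_
    filter_upwards [eventually_gt_atTop 0] with x hx
    exact div_nonneg (Finset.sum_nonneg fun i _ => GG_nonneg _ _ _) hx.le
  refine ⟨fun n => GG N τ (Real.log n), AA N τ, fun n => GG_nonneg _ _ _, AA_mero N τ,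
    fun s hs => ⟨AA_abs N τ s hs, AA_sum N τ s hs⟩, fun s hs h => AA_an N τ T (by linarith) hT0 s hs h,
    AA_res N τ hτ, ?_, ?_⟩
  · obtain ⟨b, hb, hb'⟩ := exists_between hN1
    refine lt_of_lt_of_le hb (le_limsup_of_frequently_le ?_ hb1)
    refine (floor_tend τ hτ η).frequently (Eventually.frequently ?_)
    filter_upwards [(sub_lem2 N τ hτ η).eventually (lt_mem_nhds hb')] with k hk
    rw [Nat.floor_natCast]; exact hk.le
  · obtain ⟨b, hb, hb'⟩ := exists_between hN2
    refine lt_of_le_of_lt (liminf_le_of_frequently_le ?_ hb2) hb'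
    refine (floor_tend τ hτ (2*π/τ - η)).frequently (Eventually.frequently ?_)
    filter_upwards [(sub_lem2 N τ hτ (2*π/τ - η)).eventually (gt_mem_nhds hb)] with k hk
    rw [Nat.floor_natCast]; exact hk.le
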